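/- Let n ≥ 2 and let c_1, …, c_n be integers. Let C be the symmetric tridiagonal n×n matrix with diagonal entries c_1, …, c_n and all sub- and super-diagonal entries equal to 1, and let T be the n×n matrix whose only nonzero entries are T_{1,n} = 1 and T_{n,1} = −1. Then the determinant of the skew-symmetric 2n×2n block matrix Ω = [[T, C], [−C, T]] equals (tr M(c_1, …, c_n))²; equivalently, the Pfaffian of Ω is ± tr M(c_1, …, c_n). -/

import Mathlib

/-- `M(c₁, …, c_n) = [[c₁,−1],[1,0]] ⋯ [[c_n,−1],[1,0]]`. -/
def Mneg (cs : List ℤ) : Matrix (Fin 2) (Fin 2) ℤ :=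
  (cs.map fun c => !![c, -1; 1, 0]).prod

/-- The symmetric tridiagonal `n×n` matrix with diagonal `c₁, …, c_n` and all
sub- and super-diagonal entries equal to `1`. -/
def triDiag (n : ℕ) (c : Fin n → ℤ) : Matrix (Fin n) (Fin n) ℤ :=
  Matrix.of fun i j =>
    if i = j then c i
    else if (i : ℕ) + 1 = (j : ℕ) ∨ (j : ℕ) + 1 = (i : ℕ) then 1
    else 0

/-- The `n×n` matrix whose only nonzero entries are `T_{1,n} = 1` and
`T_{n,1} = −1` (0-indexed: `T 0 (n−1) = 1`, `T (n−1) 0 = −1`). -/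
def cornerT (n : ℕ) : Matrix (Fin n) (Fin n) ℤ :=
  Matrix.of fun i j =>
    if (i : ℕ) = 0 ∧ (j : ℕ) = n - 1 then 1
    else if (i : ℕ) = n - 1 ∧ (j : ℕ) = 0 then -1
    else 0

lemma tri_tail (n : ℕ) (c : Fin (n+1) → ℤ) :
    (triDiag (n+1) c).submatrix Fin.succ Fin.succ = triDiag n (fun i => c i.succ) := by
  ext i j
  simp [triDiag]

lemma tri_rec (n : ℕ) (c : Fin (n+2) → ℤ) :
    (triDiag (n+2) c).det = c 0 * (triDiag (n+1) (fun i => c i.succ)).det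
      - (triDiag n (fun i => c i.succ.succ)).det := by
  rw [Matrix.det_succ_row_zero, Fin.sum_univ_succ, Fin.sum_univ_succ, Finset.sum_eq_zero]
  · have h1 : ((triDiag (n+2) c).submatrix Fin.succ (Fin.succAbove (Fin.succ 0))).det
        = (triDiag n (fun i => c i.succ.succ)).det := by
      rw [Matrix.det_succ_column_zero, Fin.sum_univ_succ, Finset.sum_eq_zero]
      · rw [Matrix.submatrix_submatrix, ← tri_tail n (fun i => c i.succ), ← tri_tail (n+1) c,
          Matrix.submatrix_submatrix]
        have h2 : (Fin.succAbove (Fin.succ (0 : Fin (n+1))) ∘ Fin.succ) = Fin.succ ∘ Fin.succ := by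
          funext i
          simp
        rw [Fin.succAbove_zero, h2]
        simp [triDiag]
      · intro i _
        simp [triDiag, Fin.ext_iff]
    rw [h1]
    simp only [Fin.succAbove_zero, tri_tail]
    simp [triDiag]
    ring
  · intro i _
    simp [triDiag, Fin.ext_iff]

lemma Mneg_cons (a : ℤ) (l : List ℤ) : Mneg (a :: l) = !![a, -1; 1, 0] * Mneg l := by
  simp [Mneg]

lemma Mneg_succ (n : ℕ) (c : Fin (n+1) → ℤ) :
    Mneg (List.ofFn c) = !![c 0, -1; 1, 0] * Mneg (List.ofFn (fun i => c (Fin.succ i))) := by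
  rw [List.ofFn_succ, Mneg_cons]

lemma Mneg_row (n : ℕ) (c : Fin (n+1) → ℤ) (j : Fin 2) :
    Mneg (List.ofFn c) 1 j = Mneg (List.ofFn (fun i => c (Fin.succ i))) 0 j := by
  rw [Mneg_succ]
  simp [Matrix.mul_apply, Fin.sum_univ_two]

lemma Mneg_row0 (n : ℕ) (c : Fin (n+2) → ℤ) (j : Fin 2) :
    Mneg (List.ofFn c) 0 j = c 0 * Mneg (List.ofFn (fun i => c (Fin.succ i))) 0 j
      - Mneg (List.ofFn (fun i => c (Fin.succ (Fin.succ i)))) 0 j := by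
  rw [Mneg_succ, ← Mneg_row n (fun i => c (Fin.succ i))]
  simp [Matrix.mul_apply, Fin.sum_univ_two]
  ring

lemma Mneg_00 : ∀ (n : ℕ) (c : Fin n → ℤ), Mneg (List.ofFn c) 0 0 = (triDiag n c).det
  | 0, c => by simp [Mneg]
  | 1, c => by simp [Mneg, triDiag]
  | n+2, c => by
    rw [Mneg_row0, tri_rec, Mneg_00 (n+1), Mneg_00 n]

lemma Mneg_01 : ∀ (n : ℕ) (c : Fin (n+1) → ℤ),
    Mneg (List.ofFn c) 0 1 = - (triDiag n (fun i => c i.castSucc)).det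
  | 0, c => by simp [Mneg]
  | 1, c => by simp [Mneg, triDiag]
  | n+2, c => by
    rw [Mneg_row0, tri_rec, Mneg_01 (n+1), Mneg_01 n]
    simp
    ring

lemma trace_Mneg (n : ℕ) (c : Fin (n+2) → ℤ) :
    (Mneg (List.ofFn c)).trace = (triDiag (n+2) c).det
      - (triDiag n (fun i => c i.castSucc.succ)).det := by
  rw [Matrix.trace_fin_two, Mneg_00, Mneg_row, Mneg_01]
  ring

lemma det_updateRow_single {R : Type*} [CommRing R] (n : ℕ)
    (A : Matrix (Fin (n+1)) (Fin (n+1)) R) (i j : Fin (n+1)) :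
    (A.updateRow i (Pi.single j 1)).det
      = (-1)^(i + j : ℕ) * (A.submatrix i.succAbove j.succAbove).det := by
  rw [← Matrix.adjugate_apply, Matrix.adjugate_fin_succ_eq_det_submatrix]

lemma det_low (n : ℕ) (c : Fin (n+2) → ℤ) :
    ((triDiag (n+2) c).submatrix Fin.castSucc Fin.succ).det = 1 := by
  rw [Matrix.det_of_isLowerTriangular]
  · simp [triDiag, Fin.ext_iff]
  · intro i j h
    have h : (i : ℕ) < j := h
    simp [triDiag, Fin.ext_iff]
    grind

lemma det_up (n : ℕ) (c : Fin (n+2) → ℤ) :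
    ((triDiag (n+2) c).submatrix Fin.succ Fin.castSucc).det = 1 := by
  rw [← det_low n c, ← Matrix.det_transpose]
  congr 1
  ext i j
  simp only [triDiag, Matrix.transpose_apply, Matrix.submatrix_apply, Matrix.of_apply]
  grind

lemma det_map_cast {R : Type*} [CommRing R] {m : Type*} [Fintype m] [DecidableEq m]
    (A : Matrix m m ℤ) : (A.map (Int.cast : ℤ → R)).det = (A.det : R) :=
  (Int.cast_det A).symm

lemma det_periodic {R : Type*} [CommRing R] (n : ℕ) (c : Fin (n+2) → ℤ) (x : R)
    (hx : x * x = -1) :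
    ((triDiag (n+2) c).map (Int.cast : ℤ → R) + x • (cornerT (n+2)).map (Int.cast : ℤ → R)).det
      = ((Mneg (List.ofFn c)).trace : R) := by
  set S := (triDiag (n+2) c).map (Int.cast : ℤ → R) with hS
  have hA : S + x • (cornerT (n+2)).map (Int.cast : ℤ → R)
      = (S.updateRow 0 (S 0 + x • Pi.single (Fin.last (n+1)) 1)).updateRow (Fin.last (n+1))
        (S (Fin.last (n+1)) + (-x) • Pi.single 0 1) := by
    ext i j
    rcases Fin.eq_zero_or_eq_succ i with rfl | ⟨i, rfl⟩
    · have h0 : (0 : Fin (n+2)) ≠ Fin.last (n+1) := by simp [Fin.ext_iff]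
      rw [Matrix.updateRow_ne h0, Matrix.updateRow_self]
      simp only [Matrix.add_apply, Matrix.smul_apply, Matrix.map_apply, cornerT, Matrix.of_apply,
          Pi.add_apply, Pi.smul_apply, Pi.single_apply, Fin.ext_iff, Fin.val_zero, Fin.val_last,
          show n + 2 - 1 = n + 1 from rfl, true_and]
      congr 1
      split_ifs <;> first | omega | (exfalso; tauto) | simp
    · by_cases hi : i.succ = Fin.last (n+1)
      · rw [hi, Matrix.updateRow_self]
        simp only [Matrix.add_apply, Matrix.smul_apply, Matrix.map_apply, cornerT, Matrix.of_apply,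
          Pi.add_apply, Pi.smul_apply, Pi.single_apply, Fin.ext_iff, Fin.val_zero, Fin.val_last,
          show n + 2 - 1 = n + 1 from rfl, true_and]
        congr 1
        split_ifs <;> first | omega | (exfalso; tauto) | simp
      · rw [Matrix.updateRow_ne hi, Matrix.updateRow_ne (Fin.succ_ne_zero i)]
        have hi' : ¬ (i : ℕ) = n := by simpa [Fin.ext_iff] using hi
        simp [cornerT, hi']
  have h0 : (0 : Fin (n+2)) ≠ Fin.last (n+1) := by simp [Fin.ext_iff]
  have e1 : (S.submatrix (Fin.last (n+1)).succAbove (Fin.succAbove 0)).det = 1 := by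
    have := congrArg (Int.cast : ℤ → R) (det_low n c)
    rw [← det_map_cast] at this
    simpa [Matrix.submatrix_map, hS] using this
  have e2 : (S.submatrix (Fin.succAbove 0) (Fin.last (n+1)).succAbove).det = 1 := by
    have := congrArg (Int.cast : ℤ → R) (det_up n c)
    rw [← det_map_cast] at this
    simpa [Matrix.submatrix_map, hS] using this
  have e3 : ((S.updateRow 0 (Pi.single (Fin.last (n+1)) 1)).submatrix
      (Fin.last (n+1)).succAbove (Fin.succAbove 0))
      = (S.submatrix Fin.castSucc Fin.succ).updateRow 0 (Pi.single (Fin.last n) 1) := by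
    ext i j
    rcases Fin.eq_zero_or_eq_succ i with rfl | ⟨i, rfl⟩
    · simp [Pi.single_apply, Fin.ext_iff]
    · rw [Matrix.updateRow_ne (Fin.succ_ne_zero i)]
      simp [Matrix.updateRow_apply, Fin.ext_iff]
  have e4 : ((S.submatrix Fin.castSucc Fin.succ).submatrix (Fin.succAbove 0)
      (Fin.last n).succAbove) =
      (triDiag n (fun i => c i.castSucc.succ)).map (Int.cast : ℤ → R) := by
    ext i j
    simp [hS, triDiag, Fin.ext_iff]
  rw [hA, Matrix.det_updateRow_add, Matrix.det_updateRow_smul]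
  have e6 : (S.updateRow 0 (S 0 + x • Pi.single (Fin.last (n+1)) 1)).updateRow (Fin.last (n+1))
      (S (Fin.last (n+1))) = S.updateRow 0 (S 0 + x • Pi.single (Fin.last (n+1)) 1) := by
    rw [Matrix.updateRow_comm _ h0, Matrix.updateRow_eq_self]
  rw [e6, Matrix.updateRow_comm _ h0, Matrix.det_updateRow_add, Matrix.det_updateRow_smul,
    Matrix.updateRow_eq_self, Matrix.det_updateRow_add, Matrix.det_updateRow_smul,
    Matrix.updateRow_comm _ h0.symm, Matrix.updateRow_eq_self,
    Matrix.updateRow_comm _ h0.symm, det_updateRow_single, det_updateRow_single,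
    det_updateRow_single, e1, e2, e3, det_updateRow_single, e4, det_map_cast, det_map_cast, trace_Mneg]
  rw [Int.cast_sub]
  have hs : ((-1 : R)^n) * (-1)^n = 1 := by
    rw [← mul_pow]; simp
  simp only [Fin.val_zero, Fin.val_last, zero_add, add_zero, mul_one, pow_succ]
  linear_combination ((-1 : R)^n * (-1)^n * ((triDiag n (fun i => c i.castSucc.succ)).det : R)) * hx
    - ((triDiag n (fun i => c i.castSucc.succ)).det : R) * hs

/-- for `n ≥ 2` and integers `c₁, …, c_n`, the determinant of
the skew-symmetric `2n×2n` block matrix `Ω = [[T, C], [−C, T]]` equals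
`(tr M(c₁, …, c_n))²` (equivalently, the Pfaffian of `Ω` is
`± tr M(c₁, …, c_n)`). -/
theorem stmt17 (n : ℕ) (hn : 2 ≤ n) (c : Fin n → ℤ) :
    (Matrix.fromBlocks (cornerT n) (triDiag n c) (-(triDiag n c)) (cornerT n)).det
      = (Matrix.trace (Mneg (List.ofFn c))) ^ 2 := by
  obtain ⟨n, rfl⟩ : ∃ m, n = m + 2 := ⟨n - 2, by omega⟩
  have hinj : Function.Injective (Int.cast : ℤ → ℂ) := Int.cast_injective
  apply hinj
  rw [← det_map_cast, Matrix.fromBlocks_map]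
  set T := (cornerT (n+2)).map (Int.cast : ℤ → ℂ) with hT
  set C := (triDiag (n+2) c).map (Int.cast : ℤ → ℂ) with hC
  have hneg : (-(triDiag (n+2) c)).map (Int.cast : ℤ → ℂ) = -C := by
    ext i j; simp [hC]
  rw [hneg]
  have hII : ∀ A : Matrix (Fin (n+2)) (Fin (n+2)) ℂ,
      Complex.I • Complex.I • A = -A := by
    intro A; rw [smul_smul, Complex.I_mul_I]; simp
  have hfac : Matrix.fromBlocks 1 0 (-(Complex.I • 1)) 1 * Matrix.fromBlocks T C (-C) T
      * Matrix.fromBlocks 1 0 (Complex.I • 1) 1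
      = Matrix.fromBlocks (Complex.I • (C + (-Complex.I) • T)) C 0
        ((-Complex.I) • (C + Complex.I • T)) := by
    rw [Matrix.fromBlocks_multiply, Matrix.fromBlocks_multiply]
    congr 1 <;> simp [hII] <;> abel
  have hdet := congrArg Matrix.det hfac
  rw [Matrix.det_mul, Matrix.det_mul, Matrix.det_fromBlocks_zero₁₂, Matrix.det_fromBlocks_zero₁₂,
    Matrix.det_fromBlocks_zero₂₁, Matrix.det_smul, Matrix.det_smul,
    det_periodic n c _ (by simp), det_periodic n c _ (by simp)] at hdet
  simp only [Matrix.det_one, one_mul, mul_one] at hdet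
  rw [hdet]
  have hp : Complex.I ^ (n+2) * (-Complex.I) ^ (n+2) = 1 := by
    rw [← mul_pow]; simp
  simp only [Fintype.card_fin]
  push_cast
  linear_combination ((Mneg (List.ofFn c)).trace : ℂ)^2 * hp
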